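/- Fix N > 1 and suppose that for every K < 0 the MCP(K, N) inequality holds at x: for every measurable Ω ⊆ X with 0 < μ(Ω) < ∞ and every t ∈ [0,1], μ(Ω_t) ≥ ∫_Ω t·(sinh(√(−K)·t·dist(x,z)/√(N−1)) / sinh(√(−K)·dist(x,z)/√(N−1)))^{N−1} dμ(z). Then the MCP(0, N) inequality holds at x: for every measurable Ω ⊆ X with 0 < μ(Ω) < ∞ and every t ∈ [0,1], μ(Ω_t) ≥ t^N·μ(Ω). -/

import Mathlib

open MeasureTheory Metric Filter Set

/-!
Fix `t`. Away from `x` the distortion coefficient tends to `t ^ N` as `K → 0⁻`, so Fatou's lemma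
gives the limit inequality for every `Ω` not containing `x`. If `x` is an atom of `μ`, the
coefficient `0 / 0 = 0` at `z = x` loses the mass of `{x}`. This mass is recovered geometrically:
for `0 < t` the contraction `y ↦ Φ y t` fixes `x` and maps no other point outside `C` to it, so
`{x}` and `(Ω \ {x})_t` contribute to `μ (Ω_t)` separately.
-/

open scoped Topology ENNReal

/-- The coefficient of volume distortion in the `MCP(K, N)` inequality for `K < 0` and `1 < N`, at
time `t` and distance `d`. At `d = 0` the quotient is `0 / 0 = 0`, not its limit `t`. -/
noncomputable def mcpDistortion (K N t d : ℝ) : ℝ :=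
  t * (Real.sinh (Real.sqrt (-K) * t * d / Real.sqrt (N - 1)) /
        Real.sinh (Real.sqrt (-K) * d / Real.sqrt (N - 1))) ^ (N - 1)

@[fun_prop]
lemma measurable_mcpDistortion (K N t : ℝ) : Measurable (mcpDistortion K N t) := by
  unfold mcpDistortion
  fun_prop

lemma tendsto_sinh_mul_div_sinh (t : ℝ) :
    Tendsto (fun u : ℝ ↦ Real.sinh (t * u) / Real.sinh u) (𝓝[≠] 0) (𝓝 t) := by
  refine HasDerivAt.lhopital_zero_nhds (f' := fun u ↦ Real.cosh (t * u) * t) (g' := Real.cosh)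
    (.of_forall fun u ↦ ?_) (.of_forall Real.hasDerivAt_sinh)
    (.of_forall fun u ↦ (Real.cosh_pos u).ne') ?_ ?_ ?_
  · simpa using ((hasDerivAt_id u).const_mul t).sinh
  · exact Continuous.tendsto' (by fun_prop) _ _ (by simp)
  · exact Continuous.tendsto' (by fun_prop) _ _ (by simp)
  · exact Continuous.tendsto' (by fun_prop (disch := intro u; exact (Real.cosh_pos u).ne')) _ _
      (by simp)

lemma tendsto_sqrt_neg_mul_nhdsLT_zero {c : ℝ} (hc : c ≠ 0) :
    Tendsto (fun K : ℝ ↦ Real.sqrt (-K) * c) (𝓝[<] 0) (𝓝[≠] 0) := by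
  refine tendsto_nhdsWithin_iff.2 ⟨?_, ?_⟩
  · exact (Continuous.tendsto' (by fun_prop) _ _ (by simp)).mono_left nhdsWithin_le_nhds
  · filter_upwards [self_mem_nhdsWithin] with K hK
    exact mul_ne_zero (Real.sqrt_pos.2 (neg_pos.2 hK)).ne' hc

lemma tendsto_mcpDistortion {N t d : ℝ} (hN : 1 < N) (ht : 0 ≤ t) (hd : d ≠ 0) :
    Tendsto (fun K ↦ mcpDistortion K N t d) (𝓝[<] 0) (𝓝 (t ^ N)) := by
  have hN' : 0 < N - 1 := sub_pos.2 hN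
  have hscale : d / Real.sqrt (N - 1) ≠ 0 := div_ne_zero hd (Real.sqrt_pos.2 hN').ne'
  have hratio := (tendsto_sinh_mul_div_sinh t).comp (tendsto_sqrt_neg_mul_nhdsLT_zero hscale)
  have hpow : t * t ^ (N - 1) = t ^ N := by
    rw [← Real.rpow_one_add' ht (by linarith), add_sub_cancel]
  rw [← hpow]
  refine ((hratio.rpow_const (.inr hN'.le)).const_mul t).congr fun K ↦ ?_
  simp only [mcpDistortion, Function.comp_apply, mul_div_assoc, mul_assoc, mul_left_comm t]

section Measure

variable {α ι : Type*} [MeasurableSpace α] {μ : Measure α}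

lemma lintegral_le_of_tendsto_of_frequently_le {l : Filter ι} [l.IsCountablyGenerated]
    {F : ι → α → ℝ≥0∞} {f : α → ℝ≥0∞} {b : ℝ≥0∞} (hF : ∀ i, AEMeasurable (F i) μ)
    (hlim : ∀ᵐ a ∂μ, Tendsto (fun i ↦ F i a) l (𝓝 (f a)))
    (hle : ∃ᶠ i in l, ∫⁻ a, F i a ∂μ ≤ b) : ∫⁻ a, f a ∂μ ≤ b := by
  have : l.NeBot := (frequently_true_iff_neBot l).1 (hle.mono fun _ _ ↦ trivial)
  calc ∫⁻ a, f a ∂μ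
      = ∫⁻ a, liminf (fun i ↦ F i a) l ∂μ :=
        lintegral_congr_ae (hlim.mono fun _ ha ↦ ha.liminf_eq.symm)
    _ ≤ liminf (fun i ↦ ∫⁻ a, F i a ∂μ) l := lintegral_liminf_le' hF
    _ ≤ b := liminf_le_of_frequently_le' hle

lemma mul_measure_le_measure_image_of_sdiff {S A : Set α} {φ : α → α} {c : ℝ≥0∞} (hc : c ≤ 1)
    (hA : MeasurableSet A) (hfix : EqOn φ id (S ∩ A)) (hmaps : MapsTo φ (S \ A) Aᶜ)
    (hsdiff : c * μ (S \ A) ≤ μ (φ '' (S \ A))) : c * μ S ≤ μ (φ '' S) := by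
  have hinter_subset : S ∩ A ⊆ φ '' S ∩ A := fun y hy ↦ ⟨⟨y, hy.1, hfix hy⟩, hy.2⟩
  have hsdiff_subset : φ '' (S \ A) ⊆ φ '' S \ A :=
    subset_inter (image_mono sdiff_subset) hmaps.image_subset
  calc c * μ S
      = c * μ (S ∩ A) + c * μ (S \ A) := by rw [← mul_add, measure_inter_add_sdiff S hA]
    _ ≤ μ (S ∩ A) + μ (φ '' (S \ A)) := add_le_add (mul_le_of_le_one_left' hc) hsdiff
    _ ≤ μ (φ '' S ∩ A) + μ (φ '' S \ A) := by gcongr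
    _ = μ (φ '' S) := measure_inter_add_sdiff _ hA

end Measure

section Contraction

variable {X : Type*} [MetricSpace X] [MeasurableSpace X] [OpensMeasurableSpace X] {μ : Measure X}
  {x : X} {Ω C : Set X} {φ : X → X} {N t : ℝ}

lemma ofReal_rpow_mul_measure_le_of_frequently_lintegral_mcpDistortion_le {b : ℝ≥0∞} (hN : 1 < N)
    (ht : 0 ≤ t) (hΩ : MeasurableSet Ω) (hxΩ : x ∉ Ω)
    (hle : ∃ᶠ K in 𝓝[<] (0 : ℝ),
      ∫⁻ z in Ω, ENNReal.ofReal (mcpDistortion K N t (dist x z)) ∂μ ≤ b) :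
    ENNReal.ofReal (t ^ N) * μ Ω ≤ b := by
  rw [← setLIntegral_const]
  refine lintegral_le_of_tendsto_of_frequently_le (fun K ↦ by fun_prop) ?_ hle
  filter_upwards [ae_restrict_mem hΩ] with z hz
  have hxz : dist x z ≠ 0 := dist_ne_zero.2 (ne_of_mem_of_not_mem hz hxΩ).symm
  exact ENNReal.tendsto_ofReal (tendsto_mcpDistortion hN ht hxz)

lemma ofReal_rpow_mul_measure_le_measure_image_of_sdiff_singleton (hC : μ C = 0) (hN : 0 < N)
    (ht : t ∈ Icc (0 : ℝ) 1) (hφ : ∀ y ∉ C, dist x (φ y) = t * dist x y)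
    (hsdiff : ENNReal.ofReal (t ^ N) * μ (Ω \ {x}) ≤ μ (φ '' ((Ω \ {x}) \ C))) :
    ENNReal.ofReal (t ^ N) * μ Ω ≤ μ (φ '' (Ω \ C)) := by
  obtain rfl | ht0 := ht.1.eq_or_lt
  · simp [Real.zero_rpow hN.ne']
  rw [← measure_sdiff_null hC]
  refine mul_measure_le_measure_image_of_sdiff
    (ENNReal.ofReal_le_one.2 (Real.rpow_le_one ht.1 ht.2 hN.le)) (measurableSet_singleton x)
    ?_ ?_ ?_
  · rintro y ⟨⟨-, hyC⟩, rfl⟩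
    exact (dist_eq_zero.1 (by simpa using hφ y hyC)).symm
  · rintro y ⟨⟨-, hyC⟩, hyx⟩ hφy
    have hdist : t * dist x y = 0 := by rw [← hφ y hyC, hφy, dist_self]
    exact hyx (dist_eq_zero.1 ((mul_eq_zero_iff_left ht0.ne').1 hdist)).symm
  · rwa [sdiff_sdiff_comm, measure_sdiff_null hC]

theorem MCP_neg_limit_general (hC : μ C = 0) (hN : 1 < N) (ht : t ∈ Icc (0 : ℝ) 1)
    (hφ : ∀ y ∉ C, dist x (φ y) = t * dist x y)
    (hMCP : ∀ Ω : Set X, MeasurableSet Ω → 0 < μ Ω → μ Ω < ⊤ → ∃ᶠ K in 𝓝[<] (0 : ℝ),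
      ∫⁻ z in Ω, ENNReal.ofReal (mcpDistortion K N t (dist x z)) ∂μ ≤ μ (φ '' (Ω \ C)))
    (hΩ : MeasurableSet Ω) (hfin : μ Ω < ⊤) :
    ENNReal.ofReal (t ^ N) * μ Ω ≤ μ (φ '' (Ω \ C)) := by
  refine ofReal_rpow_mul_measure_le_measure_image_of_sdiff_singleton hC (one_pos.trans hN) ht hφ ?_
  obtain hnull | hpos := eq_zero_or_pos (μ (Ω \ {x}))
  · simp [hnull]
  have hmeas : MeasurableSet (Ω \ {x}) := hΩ.diff (measurableSet_singleton x)
  exact ofReal_rpow_mul_measure_le_of_frequently_lintegral_mcpDistortion_le hN ht.1 hmeas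
    (fun hx ↦ hx.2 rfl) (hMCP _ hmeas hpos ((measure_mono sdiff_subset).trans_lt hfin))

end Contraction

lemma dist_eq_mul_of_constant_speed {X : Type*} [PseudoMetricSpace X] {γ : ℝ → X} {L t : ℝ}
    (hγ : ∀ r ∈ Icc (0 : ℝ) 1, ∀ s ∈ Icc (0 : ℝ) 1, dist (γ r) (γ s) = |r - s| * L)
    (ht : t ∈ Icc (0 : ℝ) 1) : dist (γ 0) (γ t) = t * L := by
  rw [hγ 0 unitInterval.zero_mem t ht, zero_sub, abs_neg, abs_of_nonneg ht.1]

/-- Step 3 of the proof of Theorem 1.1 of the paper (the limiting argument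
`K → 0⁻`): if the `MCP(K, N)` inequality holds at `x` for every `K < 0`, then
the `MCP(0, N)` inequality `μ(Ω_t) ≥ t^N μ(Ω)` holds at `x`. -/
theorem MCP_neg_limit {X : Type*} [MetricSpace X] [MeasurableSpace X]
    [BorelSpace X] (μ : Measure X)
    (hball : ∀ (y : X) (r : ℝ), 0 < r → 0 < μ (ball y r) ∧ μ (ball y r) < ⊤)
    (x : X) (C : Set X) (hC : μ C = 0) (Φ : X → ℝ → X)
    (hΦ : ∀ y ∉ C, Φ y 0 = x ∧ Φ y 1 = y ∧
      ∀ s ∈ Icc (0 : ℝ) 1, ∀ t ∈ Icc (0 : ℝ) 1,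
        dist (Φ y s) (Φ y t) = |s - t| * dist x y)
    (N : ℝ) (hN : 1 < N)
    (hMCP : ∀ K : ℝ, K < 0 → ∀ Ω : Set X, MeasurableSet Ω →
      0 < μ Ω → μ Ω < ⊤ →
      ∀ t ∈ Icc (0 : ℝ) 1,
        μ ((fun y => Φ y t) '' (Ω \ C)) ≥
          ∫⁻ z in Ω, ENNReal.ofReal
            (t * (Real.sinh (Real.sqrt (-K) * t * dist x z / Real.sqrt (N - 1)) /
                  Real.sinh (Real.sqrt (-K) * dist x z / Real.sqrt (N - 1)))
              ^ (N - 1)) ∂μ) :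
    ∀ Ω : Set X, MeasurableSet Ω → 0 < μ Ω → μ Ω < ⊤ →
      ∀ t ∈ Icc (0 : ℝ) 1,
        μ ((fun y => Φ y t) '' (Ω \ C)) ≥ ENNReal.ofReal (t ^ N) * μ Ω := by
  intro Ω hΩ _ hfin t ht
  refine MCP_neg_limit_general (x := x) hC hN ht (fun y hy ↦ ?_) (fun S hS hpos hfin ↦ ?_) hΩ hfin
  · simpa only [(hΦ y hy).1] using dist_eq_mul_of_constant_speed (hΦ y hy).2.2 ht
  · exact Eventually.frequently <| eventually_nhdsWithin_of_forall fun K hK ↦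
      hMCP K hK S hS hpos hfin t ht
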